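/- arXiv:1110.3493 — 3 statements merged into one kernel-verified Lean document; each statement's English description precedes it below -/
import Mathlib

section
/- For every integer l ≥ 3, the sum of double zeta values ∑_{j=2}^{l-1} ζ₂(l-j, j) equals ζ(l), where ζ₂(k₁,k₂) = ∑_{1≤m₁<m₂} 1/(m₁^{k₁} m₂^{k₂}) and ζ is the Riemann zeta function. -/
open scoped BigOperators

/-- Double zeta value `ζ₂(k₁,k₂) = ∑_{1 ≤ m < m+n} 1/(m^{k₁} (m+n)^{k₂})`. -/
noncomputable def zeta2 (k1 k2 : ℕ) : ℂ :=
  ∑' p : ℕ × ℕ, 1 / (((p.1 : ℂ) + 1) ^ k1 * ((p.1 : ℂ) + 1 + ((p.2 : ℂ) + 1)) ^ k2)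

/-!
Write `T(r, s, t) = ∑_{m,n ≥ 1} 1/(m^r n^s (m+n)^t)`, so that `ζ₂(k₁,k₂) = T(k₁, 0, k₂)`. From
`1/(mn) = (1/m + 1/n)/(m+n)` one gets `T(r+1, s+1, t) = T(r, s+1, t+1) + T(r+1, s, t+1)`, and
iterating this from `T(l-2, 1, 1)` yields `T(l-2, 1, 1) = T(0, 1, l-1) + ∑_{j=2}^{l-1} ζ₂(l-j, j)`.
Summing over `n` with `m` fixed gives `T(l-2, 1, 1) = ∑_m H_m / m^{l-1}`, while summing over `n`
with `m+n` fixed gives `T(0, 1, l-1) = ∑_m H_{m-1} / m^{l-1}`. Since `H_m - H_{m-1} = 1/m`, the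
two differ by `ζ(l)`.
-/

open Filter Finset Topology

section Telescoping

variable {u : ℕ → ℝ} {c : ℝ}

theorem hasSum_sub_succ_of_antitone (hu : Antitone u) (hc : Tendsto u atTop (𝓝 c)) :
    HasSum (fun n => u n - u (n + 1)) (u 0 - c) := by
  rw [hasSum_iff_tendsto_nat_of_nonneg fun n => sub_nonneg.2 (hu n.le_succ)]
  simpa only [sum_range_sub'] using hc.const_sub (u 0)

theorem hasSum_sub_add_of_antitone (hu : Antitone u) (hc : Tendsto u atTop (𝓝 c)) (a : ℕ) :
    HasSum (fun n => u n - u (n + a)) (∑ i ∈ range a, (u i - c)) := by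
  induction a with
  | zero => simp
  | succ a ih =>
    have hshift : HasSum (fun n => u (n + a) - u (n + a + 1)) (u a - c) := by
      simpa only [zero_add, Nat.add_right_comm] using
        hasSum_sub_succ_of_antitone (u := fun n => u (n + a))
          (fun _ _ h => hu (Nat.add_le_add_right h a)) ((tendsto_add_atTop_iff_nat a).2 hc)
    rw [sum_range_succ]
    simpa only [sub_add_sub_cancel, add_assoc] using ih.add hshift

end Telescoping

theorem hasSum_sum_range_succ_mul {R : Type*} [NonUnitalNonAssocSemiring R] [TopologicalSpace R]
    [ContinuousAdd R] [RegularSpace R] {f g : ℕ → R} {a : R}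
    (h : HasSum (fun p : ℕ × ℕ => f p.2 * g (p.1 + p.2)) a) :
    HasSum (fun n => (∑ i ∈ range (n + 1), f i) * g n) a := by
  rw [← HasAntidiagonal.sigmaAntidiagonalEquivProd.hasSum_iff] at h
  refine h.sigma fun n => ?_
  have hfiber : ∑ p ∈ antidiagonal n, f p.2 * g (p.1 + p.2) =
      (∑ i ∈ range (n + 1), f i) * g n := by
    rw [← Nat.sum_antidiagonal_swap, sum_mul,
      ← Nat.sum_antidiagonal_eq_sum_range_succ fun i _ => f i * g n]
    refine sum_congr rfl fun p hp => ?_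
    rw [Prod.fst_swap, Prod.snd_swap, add_comm, mem_antidiagonal.1 hp]
  exact hfiber ▸ Finset.hasSum _ _

theorem cast_harmonic_eq_sum {K : Type*} [DivisionRing K] [CharZero K] (a : ℕ) :
    (harmonic a : K) = ∑ i ∈ range a, 1 / ((i : K) + 1) := by
  simp [harmonic]

theorem hasSum_one_div_sub_one_div_add (a : ℕ) :
    HasSum (fun n : ℕ => 1 / ((n : ℝ) + 1) - 1 / (((n + a : ℕ) : ℝ) + 1)) (harmonic a : ℝ) := by
  simpa only [sub_zero, ← cast_harmonic_eq_sum] using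
    hasSum_sub_add_of_antitone (fun _ _ h => Nat.one_div_le_one_div h)
      tendsto_one_div_add_atTop_nhds_zero_nat a

-- By AM-GM, a spare factor `x + y` is shared out equally, which separates the variables and lifts
-- both exponents above `1`.
theorem mul_rpow_three_halves_le {x y : ℝ} (hx : 0 ≤ x) (hy : 0 ≤ y) :
    x ^ (3 / 2 : ℝ) * y ^ (3 / 2 : ℝ) ≤ x * y * (x + y) := by
  have hxy : 0 ≤ x * y := mul_nonneg hx hy
  have hsqrt : √(x * y) ≤ x + y := Real.sqrt_le_iff.2 ⟨by positivity, by nlinarith⟩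
  calc x ^ (3 / 2 : ℝ) * y ^ (3 / 2 : ℝ) = (x * y) ^ (1 + 1 / 2 : ℝ) := by
        rw [← Real.mul_rpow hx hy]
        norm_num
    _ = x * y * √(x * y) := by
        rw [Real.rpow_one_add' hxy (by norm_num), Real.sqrt_eq_rpow]
    _ ≤ x * y * (x + y) := by gcongr

section MordellTornheim

/-- The summand `1 / (m ^ r * n ^ s * (m + n) ^ t)` of the Mordell–Tornheim double series, indexed
by the pair `p = (m - 1, n - 1)` so that `p` ranges over all of `ℕ × ℕ`. -/
noncomputable def mordellTornheimTerm (r s t : ℕ) (p : ℕ × ℕ) : ℝ :=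
  1 / (((p.1 : ℝ) + 1) ^ r * ((p.2 : ℝ) + 1) ^ s * ((p.1 : ℝ) + 1 + ((p.2 : ℝ) + 1)) ^ t)

/-- The Mordell–Tornheim double series
`T(r, s, t) = ∑_{m, n ≥ 1} 1 / (m ^ r * n ^ s * (m + n) ^ t)`, which interpolates between double
zeta values (`s = 0`) and products of zeta values (`t = 0`). Its value is `0` when the series
diverges. -/
noncomputable def mordellTornheim (r s t : ℕ) : ℝ :=
  ∑' p, mordellTornheimTerm r s t p

variable {r s t : ℕ}

theorem zeta2_eq_mordellTornheim (k₁ k₂ : ℕ) : zeta2 k₁ k₂ = mordellTornheim k₁ 0 k₂ := by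
  simp [zeta2, mordellTornheim, mordellTornheimTerm, Complex.ofReal_tsum]

theorem mordellTornheimTerm_nonneg (r s t : ℕ) (p : ℕ × ℕ) : 0 ≤ mordellTornheimTerm r s t p := by
  unfold mordellTornheimTerm
  positivity

theorem mordellTornheimTerm_anti {r' s' t' : ℕ} (hr : r ≤ r') (hs : s ≤ s') (ht : t ≤ t')
    (p : ℕ × ℕ) : mordellTornheimTerm r' s' t' p ≤ mordellTornheimTerm r s t p := by
  have hm : (1 : ℝ) ≤ p.1 + 1 := by simp
  have hn : (1 : ℝ) ≤ p.2 + 1 := by simp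
  unfold mordellTornheimTerm
  gcongr
  linarith

theorem mordellTornheimTerm_succ_succ (r s t : ℕ) (p : ℕ × ℕ) :
    mordellTornheimTerm (r + 1) (s + 1) t p =
      mordellTornheimTerm r (s + 1) (t + 1) p + mordellTornheimTerm (r + 1) s (t + 1) p := by
  unfold mordellTornheimTerm
  field_simp
  ring

theorem summable_mordellTornheimTerm_one_one_one : Summable (mordellTornheimTerm 1 1 1) := by
  have hrpow : Summable fun n : ℕ => 1 / ((n : ℝ) + 1) ^ (3 / 2 : ℝ) := by
    exact_mod_cast (summable_nat_add_iff 1).2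
      (Real.summable_one_div_nat_rpow (p := 3 / 2) |>.2 (by norm_num))
  refine .of_nonneg_of_le (mordellTornheimTerm_nonneg 1 1 1) (fun p => ?_)
    (hrpow.mul_of_nonneg hrpow (fun n => by positivity) (fun n => by positivity))
  simp only [mordellTornheimTerm, pow_one, one_div_mul_one_div]
  exact one_div_le_one_div_of_le (by positivity)
    (mul_rpow_three_halves_le (by positivity) (by positivity))

theorem summable_mordellTornheimTerm_succ (r s t : ℕ) :
    Summable (mordellTornheimTerm (r + 1) (s + 1) (t + 1)) :=
  .of_nonneg_of_le (mordellTornheimTerm_nonneg _ _ _)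
    (mordellTornheimTerm_anti (by lia) (by lia) (by lia)) summable_mordellTornheimTerm_one_one_one

theorem summable_mordellTornheimTerm_of_succ_left
    (h : Summable (mordellTornheimTerm (r + 1) (s + 1) t)) :
    Summable (mordellTornheimTerm r (s + 1) (t + 1)) :=
  .of_nonneg_of_le (mordellTornheimTerm_nonneg _ _ _) (fun p => by
    rw [mordellTornheimTerm_succ_succ]
    exact le_add_of_nonneg_right (mordellTornheimTerm_nonneg _ _ _ p)) h

theorem summable_mordellTornheimTerm_of_succ_right
    (h : Summable (mordellTornheimTerm (r + 1) (s + 1) t)) :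
    Summable (mordellTornheimTerm (r + 1) s (t + 1)) :=
  .of_nonneg_of_le (mordellTornheimTerm_nonneg _ _ _) (fun p => by
    rw [mordellTornheimTerm_succ_succ]
    exact le_add_of_nonneg_left (mordellTornheimTerm_nonneg _ _ _ p)) h

theorem summable_mordellTornheimTerm_zero_succ (s t : ℕ) :
    Summable (mordellTornheimTerm 0 (s + 1) (t + 2)) :=
  summable_mordellTornheimTerm_of_succ_left (summable_mordellTornheimTerm_succ 0 s t)

theorem mordellTornheim_succ_succ (h : Summable (mordellTornheimTerm (r + 1) (s + 1) t)) :
    mordellTornheim (r + 1) (s + 1) t =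
      mordellTornheim r (s + 1) (t + 1) + mordellTornheim (r + 1) s (t + 1) := by
  simp only [mordellTornheim, mordellTornheimTerm_succ_succ r s t]
  exact (summable_mordellTornheimTerm_of_succ_left h).tsum_add
    (summable_mordellTornheimTerm_of_succ_right h)

theorem mordellTornheim_one_eq_add_sum (h : Summable (mordellTornheimTerm r 1 t)) :
    mordellTornheim r 1 t = mordellTornheim 0 1 (t + r) +
      ∑ j ∈ Ico (t + 1) (t + 1 + r), mordellTornheim (t + 1 + r - j) 0 j := by
  induction r generalizing t with
  | zero => simp
  | succ r ih =>
    rw [mordellTornheim_succ_succ h, ih (summable_mordellTornheimTerm_of_succ_left h),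
      sum_eq_sum_Ico_succ_bot (by lia : t + 1 < t + 1 + (r + 1)), Nat.add_sub_cancel_left,
      show t + 1 + r = t + (r + 1) by lia, show t + 1 + 1 + r = t + 1 + (r + 1) by lia]
    ring

theorem hasSum_harmonic_succ_div_pow (h : Summable (mordellTornheimTerm r 1 1)) :
    HasSum (fun m : ℕ => (harmonic (m + 1) : ℝ) / ((m : ℝ) + 1) ^ (r + 1))
      (mordellTornheim r 1 1) := by
  refine h.hasSum.prod_fiberwise fun m => ?_
  refine ((hasSum_one_div_sub_one_div_add (m + 1)).div_const _).congr_fun fun n => ?_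
  simp only [mordellTornheimTerm]
  push_cast
  field_simp
  ring

theorem hasSum_harmonic_div_pow (h : Summable (mordellTornheimTerm 0 1 t)) :
    HasSum (fun m : ℕ => (harmonic m : ℝ) / ((m : ℝ) + 1) ^ t) (mordellTornheim 0 1 t) := by
  have hdiag : HasSum (fun n : ℕ =>
      (∑ i ∈ range (n + 1), 1 / ((i : ℝ) + 1)) * (1 / ((n : ℝ) + 2) ^ t))
      (mordellTornheim 0 1 t) := by
    refine hasSum_sum_range_succ_mul (f := fun n : ℕ => 1 / ((n : ℝ) + 1))
      (g := fun n : ℕ => 1 / ((n : ℝ) + 2) ^ t) (h.hasSum.congr_fun fun p => ?_)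
    simp only [mordellTornheimTerm, one_div_mul_one_div, pow_zero, pow_one, one_mul]
    push_cast
    ring
  rw [← hasSum_nat_add_iff' 1]
  simp only [← cast_harmonic_eq_sum, mul_one_div] at hdiag
  simpa [add_assoc, one_add_one_eq_two] using hdiag

theorem hasSum_one_div_pow_mordellTornheim_sub (r : ℕ) :
    HasSum (fun m : ℕ => 1 / ((m : ℝ) + 1) ^ (r + 3))
      (mordellTornheim (r + 1) 1 1 - mordellTornheim 0 1 (r + 2)) := by
  refine ((hasSum_harmonic_succ_div_pow (summable_mordellTornheimTerm_succ r 0 0)).sub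
    (hasSum_harmonic_div_pow (summable_mordellTornheimTerm_zero_succ 0 r))).congr_fun fun m => ?_
  rw [← sub_div, harmonic_succ]
  push_cast
  field_simp
  ring

theorem riemannZeta_eq_mordellTornheim_sub (r : ℕ) :
    riemannZeta (r + 3 : ℕ) =
      (mordellTornheim (r + 1) 1 1 - mordellTornheim 0 1 (r + 2) : ℝ) := by
  rw [zeta_eq_tsum_one_div_nat_add_one_cpow (by norm_cast; lia),
    ← (hasSum_one_div_pow_mordellTornheim_sub r).tsum_eq, Complex.ofReal_tsum]
  simp only [Complex.cpow_natCast]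
  push_cast
  rfl

end MordellTornheim

theorem sum_formula_double_zeta (l : ℕ) (hl : 3 ≤ l) :
    ∑ j ∈ Finset.Icc 2 (l - 1), zeta2 (l - j) j = riemannZeta l := by
  obtain ⟨r, rfl⟩ := Nat.exists_eq_add_of_le' hl
  have hdecomp : mordellTornheim (r + 1) 1 1 = mordellTornheim 0 1 (r + 2) +
      ∑ j ∈ Icc 2 (r + 3 - 1), mordellTornheim (r + 3 - j) 0 j := by
    rw [mordellTornheim_one_eq_add_sum (summable_mordellTornheimTerm_succ r 0 0)]
    congr 2 <;> grind
  rw [riemannZeta_eq_mordellTornheim_sub, hdecomp, add_sub_cancel_left, Complex.ofReal_sum]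
  exact sum_congr rfl fun j _ => zeta2_eq_mordellTornheim _ j
end

section
/- For every integer N ≥ 2, ∑_{ν=1}^{N-1} ζ₂(2N-2ν, 2ν) = (3/4) ζ(2N). -/
open scoped BigOperators

/-!
Put `a = m` and `b = m + n`. For fixed `(m, n)` the sum over `ν` is geometric with ratio
`a² / b²`, so the left-hand side is `∑_{a < b} (f a - f b) / (b² - a²)` with
`f a = a^{-2(N - 1)}`. Both halves converge absolutely. In the first, summing over `b > a`
telescopes to `∑ a, f a H_{2a} / (2a)`; in the second, summing over `a < b` gives
`∑ b, f b (H_{2b-1} - 1/b) / (2b)`. Since `H_{2a} - H_{2a-1} + 1/a = 3 / (2a)`, the difference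
is `(3/4) ∑ a, f a / a²`.
-/

open Filter Finset Function Topology

theorem sum_range_sub_shift {G : Type*} [AddCommGroup G] (u : ℕ → G) (p n : ℕ) :
    ∑ i ∈ range n, (u i - u (i + p)) = ∑ i ∈ range p, u i - ∑ i ∈ range p, u (i + n) := by
  have h_split (k l : ℕ) : ∑ i ∈ range (k + l), u i
      = ∑ i ∈ range k, u i + ∑ i ∈ range l, u (i + k) := by
    simp only [sum_range_add, add_comm _ k]
  rw [sum_sub_distrib, sub_eq_sub_iff_add_eq_add, ← h_split, add_comm n p, h_split]

theorem hasSum_sub_shift_of_antitone {u : ℕ → ℝ} (hu : Antitone u)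
    (hu_lim : Tendsto u atTop (𝓝 0)) (p : ℕ) :
    HasSum (fun i ↦ u i - u (i + p)) (∑ i ∈ range p, u i) := by
  rw [hasSum_iff_tendsto_nat_of_nonneg fun i ↦ sub_nonneg.2 (hu (Nat.le_add_right i p))]
  simp only [sum_range_sub_shift]
  have h_tail : Tendsto (fun n ↦ ∑ i ∈ range p, u (i + n)) atTop (𝓝 0) := by
    simpa using tendsto_finsetSum (range p) fun i _ ↦
      hu_lim.comp (tendsto_atTop_mono (fun n ↦ Nat.le_add_left n i) tendsto_id)
  simpa using tendsto_const_nhds.sub h_tail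

/-- The weight `1 / (b² - a²)` of a pair `a < b` of positive integers, in factored form and encoded
by `a = m + 1` and `b - a = n + 1`. -/
noncomputable def gapKernel (m n : ℕ) : ℝ := ((n + 1) * (2 * (m + 1) + (n + 1)))⁻¹

theorem gapKernel_nonneg (m n : ℕ) : 0 ≤ gapKernel m n := by
  unfold gapKernel
  positivity

theorem gapKernel_le (m n : ℕ) : gapKernel m n ≤ 1 / (n + 1 : ℝ) ^ 2 := by
  rw [gapKernel, one_div, sq]
  have h_le : (n + 1 : ℝ) ≤ 2 * (m + 1) + (n + 1) := le_add_of_nonneg_left (by positivity)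
  gcongr

theorem hasSum_gapKernel (m : ℕ) :
    HasSum (gapKernel m) (harmonic (2 * m + 2) / (2 * (m + 1))) := by
  have h_antitone : Antitone fun i : ℕ ↦ (1 : ℝ) / (i + 1) := fun i j hij ↦
    Nat.one_div_le_one_div hij
  have h_harmonic : ∑ i ∈ range (2 * m + 2), (1 : ℝ) / (i + 1) = harmonic (2 * m + 2) := by
    simp [harmonic]
  have h_telescope := (hasSum_sub_shift_of_antitone h_antitone
    tendsto_one_div_add_atTop_nhds_zero_nat (2 * m + 2)).div_const (2 * (m + 1) : ℝ)
  rw [h_harmonic] at h_telescope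
  refine h_telescope.congr_fun fun n ↦ ?_
  unfold gapKernel
  push_cast
  field_simp
  ring

theorem sum_antidiagonal_gapKernel (k : ℕ) :
    ∑ p ∈ antidiagonal k, gapKernel p.1 p.2
      = (harmonic (2 * k + 3) - (k + 2 : ℝ)⁻¹) / (2 * (k + 2)) := by
  have h_partialFractions : ∀ p ∈ antidiagonal k, gapKernel p.1 p.2
      = ((p.2 + 1 : ℝ)⁻¹ + (k + 2 + p.1 + 1 : ℝ)⁻¹) / (2 * (k + 2)) := by
    intro p hp
    obtain rfl := HasAntidiagonal.mem_antidiagonal.1 hp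
    unfold gapKernel
    push_cast
    field_simp
    ring
  have h_low : ∑ p ∈ antidiagonal k, (p.2 + 1 : ℝ)⁻¹ = harmonic (k + 1) := by
    rw [← Nat.sum_antidiagonal_swap, Nat.sum_antidiagonal_eq_sum_range_succ_mk]
    simp [harmonic]
  have h_high : ∑ p ∈ antidiagonal k, (k + 2 + p.1 + 1 : ℝ)⁻¹
      = harmonic (2 * k + 3) - harmonic (k + 2) := by
    rw [Nat.sum_antidiagonal_eq_sum_range_succ_mk, show 2 * k + 3 = k + 2 + (k + 1) by ring]
    simp [harmonic, sum_range_add _ (k + 2)]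
  rw [sum_congr rfl h_partialFractions, ← sum_div, sum_add_distrib, h_low, h_high,
    harmonic_succ (k + 1)]
  push_cast
  ring

theorem summable_norm_one_div_add_one_pow {𝕜 : Type*} [RCLike 𝕜] {k : ℕ} (hk : 1 < k) :
    Summable fun m : ℕ ↦ ‖1 / (m + 1 : 𝕜) ^ k‖ := by
  have h_shift := (summable_nat_add_iff 1).2 (Real.summable_one_div_nat_pow.2 hk)
  refine h_shift.congr fun m ↦ ?_
  rw [norm_div, norm_pow, norm_one, ← Nat.cast_add_one, RCLike.norm_natCast]

section GapSum

variable {E : Type*} [NormedAddCommGroup E] [NormedSpace ℝ E] [CompleteSpace E] {f : ℕ → E}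

theorem summable_gapKernel_smul (hf : Summable fun m ↦ ‖f m‖) {e : ℕ × ℕ → ℕ}
    (he : Injective fun p ↦ (e p, p.2)) :
    Summable fun p : ℕ × ℕ ↦ gapKernel p.1 p.2 • f (e p) := by
  have h_sq : Summable fun n : ℕ ↦ 1 / (n + 1 : ℝ) ^ 2 :=
    (summable_norm_one_div_add_one_pow (𝕜 := ℝ) one_lt_two).of_norm
  have h_prod := (hf.mul_of_nonneg h_sq (fun _ ↦ norm_nonneg _)
    fun _ ↦ by positivity).comp_injective he
  refine .of_norm_bounded h_prod fun p ↦ ?_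
  rw [norm_smul, Real.norm_of_nonneg (gapKernel_nonneg _ _), mul_comm]
  exact mul_le_mul_of_nonneg_left (gapKernel_le _ _) (norm_nonneg _)

theorem summable_gapKernel_smul_left (hf : Summable fun m ↦ ‖f m‖) :
    Summable fun p : ℕ × ℕ ↦ gapKernel p.1 p.2 • f p.1 :=
  summable_gapKernel_smul hf injective_id

theorem summable_gapKernel_smul_right (hf : Summable fun m ↦ ‖f m‖) :
    Summable fun p : ℕ × ℕ ↦ gapKernel p.1 p.2 • f (p.1 + p.2 + 1) :=
  summable_gapKernel_smul hf fun p q h ↦ by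
    simp only [Prod.mk.injEq] at h
    ext <;> lia

theorem hasSum_harmonic_smul_left (hf : Summable fun m ↦ ‖f m‖) :
    HasSum (fun m : ℕ ↦ (harmonic (2 * m + 2) / (2 * (m + 1)) : ℝ) • f m)
      (∑' p : ℕ × ℕ, gapKernel p.1 p.2 • f p.1) :=
  (summable_gapKernel_smul_left hf).hasSum.prod_fiberwise fun m ↦
    (hasSum_gapKernel m).smul_const (f m)

theorem hasSum_harmonic_smul_right (hf : Summable fun m ↦ ‖f m‖) :
    HasSum (fun m : ℕ ↦ ((harmonic (2 * m + 1) - (m + 1 : ℝ)⁻¹) / (2 * (m + 1)) : ℝ) • f m)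
      (∑' p : ℕ × ℕ, gapKernel p.1 p.2 • f (p.1 + p.2 + 1)) := by
  have h_antidiagonal (k : ℕ) : HasSum
      (fun p : antidiagonal k ↦ gapKernel p.1.1 p.1.2 • f (p.1.1 + p.1.2 + 1))
      (((harmonic (2 * k + 3) - (k + 2 : ℝ)⁻¹) / (2 * (k + 2)) : ℝ) • f (k + 1)) := by
    rw [← sum_antidiagonal_gapKernel, sum_smul]
    have h_index : ∀ p ∈ antidiagonal k, gapKernel p.1 p.2 • f (k + 1)
        = gapKernel p.1 p.2 • f (p.1 + p.2 + 1) := fun p hp ↦ by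
      rw [HasAntidiagonal.mem_antidiagonal.1 hp]
    rw [sum_congr rfl h_index]
    exact (antidiagonal k).hasSum fun p ↦ gapKernel p.1 p.2 • f (p.1 + p.2 + 1)
  have h_sigma := (HasAntidiagonal.sigmaAntidiagonalEquivProd.hasSum_iff.2
    (summable_gapKernel_smul_right hf).hasSum).sigma h_antidiagonal
  -- No `a < b` exists for `b = 1`, so the antidiagonal of `k` accounts for `b = k + 2`.
  have h_zero : ((harmonic (2 * 0 + 1) - ((0 : ℕ) + 1 : ℝ)⁻¹) / (2 * ((0 : ℕ) + 1)) : ℝ) • f 0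
      = 0 := by simp
  rw [← hasSum_nat_add_iff' 1, sum_range_one, h_zero, sub_zero]
  refine h_sigma.congr_fun fun k ↦ ?_
  rw [show 2 * (k + 1) + 1 = 2 * k + 3 by ring]
  push_cast
  ring_nf

theorem hasSum_gapKernel_smul_sub (hf : Summable fun m ↦ ‖f m‖) :
    HasSum (fun p : ℕ × ℕ ↦ gapKernel p.1 p.2 • (f p.1 - f (p.1 + p.2 + 1)))
      (∑' m : ℕ, (3 / 4 / (m + 1 : ℝ) ^ 2) • f m) := by
  have h_coeff (m : ℕ) : (harmonic (2 * m + 2) / (2 * (m + 1))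
      - (harmonic (2 * m + 1) - (m + 1 : ℝ)⁻¹) / (2 * (m + 1)) : ℝ) = 3 / 4 / (m + 1) ^ 2 := by
    rw [harmonic_succ (2 * m + 1)]
    push_cast
    field_simp
    ring
  have h_diff := (hasSum_harmonic_smul_left hf).sub (hasSum_harmonic_smul_right hf)
  simp only [← sub_smul, h_coeff] at h_diff
  simpa only [smul_sub, h_diff.tsum_eq] using
    (summable_gapKernel_smul_left hf).hasSum.sub (summable_gapKernel_smul_right hf).hasSum

end GapSum

theorem sum_Icc_one_div_pow_mul_pow {K : Type*} [Field K] {a b : K} (ha : a ≠ 0) (hb : b ≠ 0)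
    (hab : a ≠ b) (n : ℕ) :
    ∑ ν ∈ Icc 1 n, 1 / (a ^ (n + 1 - ν) * b ^ ν) = (b - a)⁻¹ * (1 / a ^ n - 1 / b ^ n) := by
  have hba : b - a ≠ 0 := sub_ne_zero.2 hab.symm
  induction n with
  | zero => simp
  | succ n ih =>
    have h_step : ∀ ν ∈ Icc 1 n, 1 / (a ^ (n + 1 + 1 - ν) * b ^ ν)
        = 1 / (a ^ (n + 1 - ν) * b ^ ν) / a := by
      intro ν hν
      rw [Nat.succ_sub ((mem_Icc.1 hν).2.trans n.le_succ), pow_succ, div_div]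
      ring
    rw [sum_Icc_succ_top (Nat.le_add_left 1 n), sum_congr rfl h_step, ← sum_div, ih,
      Nat.add_sub_cancel_left]
    field_simp
    ring

theorem riemannZeta_natCast_eq_tsum_add_one {k : ℕ} (hk : 1 < k) :
    riemannZeta k = ∑' m : ℕ, 1 / (m + 1 : ℂ) ^ k := by
  simpa only [Complex.cpow_natCast] using
    zeta_eq_tsum_one_div_nat_add_one_cpow (s := k) (by simpa using hk)

theorem summable_zeta2_term {a b : ℕ} (ha : 1 < a) (hb : 1 < b) :
    Summable fun p : ℕ × ℕ ↦
      1 / ((p.1 + 1 : ℂ) ^ a * (p.1 + 1 + (p.2 + 1) : ℂ) ^ b) := by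
  have h_inj : Injective fun p : ℕ × ℕ ↦ (p.1, p.1 + p.2 + 1) := fun p q h ↦ by
    simp only [Prod.mk.injEq] at h
    ext <;> lia
  have h_prod := summable_mul_of_summable_norm (summable_norm_one_div_add_one_pow (𝕜 := ℂ) ha)
    (summable_norm_one_div_add_one_pow (𝕜 := ℂ) hb)
  refine (h_prod.comp_injective h_inj).congr fun p ↦ ?_
  simp only [comp_apply]
  push_cast
  ring

theorem sum_zeta2_term_eq_gapKernel_smul (n : ℕ) (p : ℕ × ℕ) :
    ∑ ν ∈ Icc 1 n, 1 / ((p.1 + 1 : ℂ) ^ (2 * (n + 1) - 2 * ν) *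
        (p.1 + 1 + (p.2 + 1) : ℂ) ^ (2 * ν))
      = gapKernel p.1 p.2 •
        (1 / (p.1 + 1 : ℂ) ^ (2 * n) - 1 / ((p.1 + p.2 + 1 : ℕ) + 1 : ℂ) ^ (2 * n)) := by
  have h_fst : (p.1 + 1 : ℂ) ≠ 0 := Nat.cast_add_one_ne_zero _
  have h_snd : (p.1 + 1 + (p.2 + 1) : ℂ) ≠ 0 := by norm_cast
  have h_gap : ((p.1 + 1 + (p.2 + 1)) ^ 2 - (p.1 + 1) ^ 2 : ℂ)⁻¹ = gapKernel p.1 p.2 := by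
    unfold gapKernel
    push_cast
    ring_nf
  have h_ne : (p.1 + 1 : ℂ) ^ 2 ≠ (p.1 + 1 + (p.2 + 1)) ^ 2 := by
    norm_cast
    exact (Nat.pow_lt_pow_left (by lia) two_ne_zero).ne
  have h_geom := sum_Icc_one_div_pow_mul_pow (pow_ne_zero 2 h_fst) (pow_ne_zero 2 h_snd) h_ne n
  rw [h_gap] at h_geom
  simp only [← pow_mul, Nat.mul_sub] at h_geom
  rw [h_geom, Complex.real_smul]
  push_cast
  ring

theorem GKZ_even_sum_formula (N : ℕ) (hN : 2 ≤ N) :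
    ∑ ν ∈ Finset.Icc 1 (N - 1), zeta2 (2 * N - 2 * ν) (2 * ν)
      = (3 / 4 : ℂ) * riemannZeta (2 * N) := by
  obtain ⟨n, rfl⟩ := Nat.exists_eq_add_of_le' (one_le_two.trans hN)
  let f : ℕ → ℂ := fun m ↦ 1 / (m + 1 : ℂ) ^ (2 * n)
  have hf : Summable fun m ↦ ‖f m‖ := summable_norm_one_div_add_one_pow (by lia)
  calc ∑ ν ∈ Icc 1 n, zeta2 (2 * (n + 1) - 2 * ν) (2 * ν)
    _ = ∑' p : ℕ × ℕ, ∑ ν ∈ Icc 1 n, 1 / ((p.1 + 1 : ℂ) ^ (2 * (n + 1) - 2 * ν) *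
          (p.1 + 1 + (p.2 + 1) : ℂ) ^ (2 * ν)) :=
      (Summable.tsum_finsetSum fun ν hν ↦ by
        rw [mem_Icc] at hν
        exact summable_zeta2_term (by lia) (by lia)).symm
    _ = ∑' p : ℕ × ℕ, gapKernel p.1 p.2 • (f p.1 - f (p.1 + p.2 + 1)) :=
      tsum_congr (sum_zeta2_term_eq_gapKernel_smul n)
    _ = ∑' m : ℕ, (3 / 4 / (m + 1 : ℝ) ^ 2) • f m := (hasSum_gapKernel_smul_sub hf).tsum_eq
    _ = ∑' m : ℕ, 3 / 4 * (1 / (m + 1 : ℂ) ^ (2 * (n + 1))) := tsum_congr fun m ↦ by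
      rw [Complex.real_smul]
      simp only [f]
      push_cast
      field_simp
      ring
    _ = 3 / 4 * riemannZeta (2 * (n + 1 : ℕ)) := by
      rw [tsum_mul_left, ← riemannZeta_natCast_eq_tsum_add_one (by lia)]
      norm_cast
end

section
/- For every integer N ≥ 2, ∑_{ν=1}^{N-1} (4^ν + 4^{N-ν}) ζ₂(2N-2ν, 2ν) = (N + 4/3 + (2/3)·4^{N-1}) ζ(2N). -/
open scoped BigOperators

/-!
Multiplying the Dirichlet series of `ζ(a)` and `ζ(b)` and sorting the pairs of summation indices by
trichotomy gives the stuffle relation `ζ(a) ζ(b) = ζ₂(a, b) + ζ₂(b, a) + ζ(a + b)`. It turns a sum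
of double zeta values `ζ₂(2N - 2ν, 2ν)` with weights `c ν + c (N - ν)` into the convolution
`∑ c ν ζ(2ν) ζ(2N - 2ν)` minus `(∑ c ν) ζ(2N)`.

For `c ν = 4 ^ ν` the convolution is evaluated with `G(X) = X coth(X / 2)`, whose coefficients are
the even zeta values up to elementary factors. The duplication formula for `coth` expresses
`G(2X) G(X)`, which generates the convolution, as `G(X)² + X²`, and the Riccati equation for `coth`
expresses `G²` linearly in `G` and its derivative.
-/

open Finset

lemma sum_antidiagonal_mul_of_not_dvd_eq_zero {M : Type*} [AddCommMonoid M] {d : ℕ} (hd : 0 < d)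
    (N : ℕ) (f : ℕ × ℕ → M) (hf : ∀ p, ¬ d ∣ p.1 → f p = 0) :
    ∑ p ∈ antidiagonal (d * N), f p = ∑ p ∈ antidiagonal N, f (d * p.1, d * p.2) := by
  symm
  refine sum_of_injOn (fun p => (d * p.1, d * p.2)) ?_ ?_ ?_ fun _ _ => rfl
  · rintro p - q - h
    simpa [Prod.ext_iff, hd.ne'] using h
  · rintro p hp
    simp_all [← mul_add]
  · rintro ⟨a, b⟩ hab h_range
    refine hf _ fun ⟨i, (hi : a = d * i)⟩ => h_range ?_
    rw [HasAntidiagonal.mem_antidiagonal] at hab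
    obtain ⟨j, rfl⟩ : d ∣ b := (Nat.dvd_add_right ⟨i, hi⟩).mp ⟨N, hab⟩
    subst hi
    refine ⟨(i, j), ?_, rfl⟩
    simpa [← mul_add, hd.ne'] using hab

section Coth

open PowerSeries

/-- The power series of `X * coth (X / 2) = 2 * X / (exp X - 1) + X`, an even function of `X`. It is
twice the even part of the exponential generating function of the Bernoulli numbers. -/
noncomputable def cothPowerSeries : PowerSeries ℚ :=
  2 * bernoulliPowerSeries ℚ + X

lemma coeff_cothPowerSeries_of_ne_one {n : ℕ} (hn : n ≠ 1) :
    coeff n cothPowerSeries = 2 * (bernoulli n / n.factorial) := by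
  simp [cothPowerSeries, ← map_ofNat C 2, coeff_C_mul, bernoulliPowerSeries, coeff_X, hn]

lemma coeff_cothPowerSeries_of_odd {n : ℕ} (hn : Odd n) : coeff n cothPowerSeries = 0 := by
  rcases eq_or_ne n 1 with rfl | h1
  · rw [cothPowerSeries, map_add, ← map_ofNat C 2, coeff_C_mul]
    norm_num [bernoulliPowerSeries]
  · rw [coeff_cothPowerSeries_of_ne_one h1,
      bernoulli_eq_zero_of_odd hn (by have := hn.pos; lia), zero_div, mul_zero]

lemma cothPowerSeries_mul_exp_sub_one :
    cothPowerSeries * (exp ℚ - 1) = X * (exp ℚ + 1) := by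
  rw [cothPowerSeries]
  linear_combination 2 * bernoulliPowerSeries_mul_exp_sub_one ℚ

lemma rescale_two_cothPowerSeries_mul_exp_sq_sub_one :
    rescale 2 cothPowerSeries * (exp ℚ ^ 2 - 1) = 2 * X * (exp ℚ ^ 2 + 1) := by
  have h := congrArg (rescale (2 : ℚ)) cothPowerSeries_mul_exp_sub_one
  have rescale_exp : rescale (2 : ℚ) (exp ℚ) = exp ℚ ^ 2 := mod_cast (exp_pow_eq_rescale_exp 2).symm
  simpa only [map_mul, map_sub, map_add, map_one, rescale_exp, rescale_X, map_ofNat] using h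

lemma powerSeries_exp_sub_one_ne_zero {A : Type*} [Ring A] [Algebra ℚ A] [Nontrivial A] :
    exp A - 1 ≠ 0 := fun h => by
  simpa [coeff_exp, coeff_one] using congrArg (coeff 1) h

lemma powerSeries_exp_add_one_ne_zero {A : Type*} [Ring A] [Algebra ℚ A] [Nontrivial A] :
    exp A + 1 ≠ 0 := fun h => by
  simpa [coeff_exp, coeff_one] using congrArg (coeff 1) h

/-- The duplication formula `2 * coth (2 * y) = coth y + (coth y)⁻¹`. -/
lemma rescale_two_cothPowerSeries_mul_cothPowerSeries :
    rescale 2 cothPowerSeries * cothPowerSeries = cothPowerSeries ^ 2 + X ^ 2 := by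
  have hG := cothPowerSeries_mul_exp_sub_one
  have hS := rescale_two_cothPowerSeries_mul_exp_sq_sub_one
  have h0 := mul_ne_zero (pow_ne_zero 2 (powerSeries_exp_sub_one_ne_zero (A := ℚ)))
    powerSeries_exp_add_one_ne_zero
  refine mul_left_cancel₀ h0 ?_
  linear_combination cothPowerSeries * (exp ℚ - 1) * hS +
    (2 * X * (exp ℚ ^ 2 + 1) - (exp ℚ + 1) *
      (cothPowerSeries * (exp ℚ - 1) + X * (exp ℚ + 1))) * hG

/-- The Riccati equation `coth' = 1 - coth ^ 2`. -/
lemma cothPowerSeries_sq :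
    cothPowerSeries ^ 2 =
      2 * (cothPowerSeries - X * derivative ℚ cothPowerSeries) + X ^ 2 := by
  have hG := cothPowerSeries_mul_exp_sub_one
  have hD := congrArg (derivative ℚ) hG
  simp only [Derivation.leibniz, map_sub, map_add, derivative_exp, derivative_one,
    derivative_X, smul_eq_mul] at hD
  refine mul_left_cancel₀ (pow_ne_zero 2 powerSeries_exp_sub_one_ne_zero) ?_
  linear_combination (cothPowerSeries * (exp ℚ - 1) + X * (exp ℚ + 1) - 2 * (exp ℚ - 1)
    - 2 * X * exp ℚ) * hG + 2 * X * (exp ℚ - 1) * hD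

lemma coeff_X_mul_derivative {R : Type*} [CommSemiring R] (f : PowerSeries R) (n : ℕ) :
    coeff n (X * derivative R f) = n * coeff n f := by
  cases n with
  | zero => simp
  | succ n => rw [coeff_succ_X_mul, coeff_derivative, mul_comm, Nat.cast_succ]

lemma sum_antidiagonal_four_pow_mul_bernoulli {N : ℕ} (hN : N ≠ 1) :
    ∑ p ∈ antidiagonal N, 4 ^ p.1 * ((bernoulli (2 * p.1) / (2 * p.1).factorial) *
        (bernoulli (2 * p.2) / (2 * p.2).factorial)) =
      (1 - 2 * N) * (bernoulli (2 * N) / (2 * N).factorial) := by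
  have linearized : rescale 2 cothPowerSeries * cothPowerSeries =
      C 2 * (cothPowerSeries - X * derivative ℚ cothPowerSeries + X ^ 2) := by
    rw [rescale_two_cothPowerSeries_mul_cothPowerSeries, cothPowerSeries_sq, map_ofNat]
    ring
  have two_mul_ne_one (k : ℕ) : 2 * k ≠ 1 := by lia
  have two_sq : (2 : ℚ) ^ 2 = 4 := by norm_num
  have pull_four (a b c : ℚ) : a * (2 * b) * (2 * c) = 4 * (a * (b * c)) := by ring
  have odd_terms_vanish (p : ℕ × ℕ) (hp : ¬ 2 ∣ p.1) :
      coeff p.1 (rescale 2 cothPowerSeries) * coeff p.2 cothPowerSeries = 0 := by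
    rw [coeff_rescale, coeff_cothPowerSeries_of_odd (by grind), mul_zero, zero_mul]
  have hcoeff := congrArg (coeff (2 * N)) linearized
  rw [coeff_mul, sum_antidiagonal_mul_of_not_dvd_eq_zero two_pos _ _ odd_terms_vanish, coeff_C_mul,
    map_add, map_sub, coeff_X_mul_derivative, coeff_X_pow, if_neg (by lia)] at hcoeff
  simp only [coeff_rescale, coeff_cothPowerSeries_of_ne_one (two_mul_ne_one _), pow_mul, two_sq,
    pull_four, ← mul_sum, Nat.cast_mul, Nat.cast_ofNat] at hcoeff
  linear_combination hcoeff / 4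

end Coth

section EvenZeta

lemma riemannZeta_two_mul_nat_eq_mul_bernoulli_div_factorial (k : ℕ) :
    riemannZeta (2 * k) = -(2 * Real.pi * Complex.I) ^ (2 * k) / 2 *
      ((bernoulli (2 * k) / (2 * k).factorial : ℚ) : ℂ) := by
  have two_zpow : (2 : ℂ) ^ (2 * k - 1 : ℤ) = 2 ^ (2 * k) / 2 := by
    rw [zpow_sub_one₀ two_ne_zero, div_eq_mul_inv]
    norm_cast
  rw [riemannZeta_two_mul_nat', two_zpow, mul_pow, mul_pow, pow_mul Complex.I, Complex.I_sq]
  push_cast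
  ring

lemma sum_antidiagonal_four_pow_mul_riemannZeta {N : ℕ} (hN : N ≠ 1) :
    ∑ p ∈ antidiagonal N, 4 ^ p.1 * (riemannZeta (2 * p.1) * riemannZeta (2 * p.2)) =
      (N - 1 / 2) * riemannZeta (2 * N) := by
  set κ : ℂ := (2 * Real.pi * Complex.I) ^ (2 * N) with hκ
  have hB := congrArg (Rat.cast (K := ℂ)) (sum_antidiagonal_four_pow_mul_bernoulli hN)
  calc _ = ∑ p ∈ antidiagonal N, κ / 4 * ((4 ^ p.1 *
          ((bernoulli (2 * p.1) / (2 * p.1).factorial) *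
            (bernoulli (2 * p.2) / (2 * p.2).factorial)) : ℚ) : ℂ) := by
        refine sum_congr rfl fun p hp => ?_
        simp only [riemannZeta_two_mul_nat_eq_mul_bernoulli_div_factorial]
        rw [hκ, ← HasAntidiagonal.mem_antidiagonal.mp hp]
        push_cast
        ring
    _ = κ / 4 * (((1 - 2 * N) * (bernoulli (2 * N) / (2 * N).factorial) : ℚ) : ℂ) := by
        rw [← mul_sum, ← Rat.cast_sum, hB]
    _ = (N - 1 / 2) * riemannZeta (2 * N) := by
        rw [riemannZeta_two_mul_nat_eq_mul_bernoulli_div_factorial]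
        push_cast
        ring

lemma sum_Ico_four_pow_mul_riemannZeta {N : ℕ} (hN : 2 ≤ N) :
    ∑ ν ∈ Ico 1 N, 4 ^ ν * (riemannZeta (2 * ν) * riemannZeta (2 * (N - ν : ℕ))) =
      (N + 4 ^ N / 2) * riemannZeta (2 * N) := by
  have h := sum_antidiagonal_four_pow_mul_riemannZeta (N := N) (by lia)
  rw [Finset.Nat.sum_antidiagonal_eq_sum_range_succ_mk, sum_range_succ, range_eq_Ico,
    sum_eq_sum_Ico_succ_bot (by lia)] at h
  simp only [Nat.cast_zero, mul_zero, pow_zero, riemannZeta_zero, Nat.sub_zero, Nat.sub_self] at h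
  linear_combination h

end EvenZeta

section Stuffle

/-- The classification of pairs of natural numbers as `(m, m + n + 1)`, `(m + n + 1, m)` or
`(k, k)`, according to the sign of the difference of their entries. -/
def natProdTrichotomyEquiv : ((ℕ × ℕ) ⊕ (ℕ × ℕ)) ⊕ ℕ ≃ ℕ × ℕ where
  toFun := Sum.elim (Sum.elim (fun p => (p.1, p.1 + p.2 + 1)) fun p => (p.1 + p.2 + 1, p.1))
    fun k => (k, k)
  invFun p :=
    if p.1 < p.2 then .inl (.inl (p.1, p.2 - p.1 - 1))
    else if p.2 < p.1 then .inl (.inr (p.2, p.1 - p.2 - 1))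
    else .inr p.1
  left_inv := by rintro ((p | p) | k) <;> grind
  right_inv := by rintro ⟨m, n⟩; grind

lemma tsum_nat_prod_eq_tsum_trichotomy {α : Type*} [AddCommGroup α] [UniformSpace α]
    [IsUniformAddGroup α] [CompleteSpace α] [T2Space α] {f : ℕ × ℕ → α} (hf : Summable f) :
    ∑' p, f p = ∑' p : ℕ × ℕ, f (p.1, p.1 + p.2 + 1) + ∑' p : ℕ × ℕ, f (p.1 + p.2 + 1, p.1)
      + ∑' k, f (k, k) := by
  have h := natProdTrichotomyEquiv.summable_iff.mpr hf
  have h_ne := h.comp_injective Sum.inl_injective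
  rw [← natProdTrichotomyEquiv.tsum_eq, ← Function.comp_def f,
    Summable.tsum_sum h_ne (h.comp_injective Sum.inr_injective)]
  exact congrArg (· + _) (Summable.tsum_sum (h_ne.comp_injective Sum.inl_injective)
    (h_ne.comp_injective Sum.inr_injective))

lemma riemannZeta_nat_eq_tsum_one_div_nat_add_one_pow {k : ℕ} (hk : 1 < k) :
    riemannZeta k = ∑' n : ℕ, 1 / ((n : ℂ) + 1) ^ k := by
  simpa using zeta_eq_tsum_one_div_nat_add_one_cpow (s := k) (by simpa using hk)

lemma summable_norm_one_div_nat_add_one_pow {k : ℕ} (hk : 1 < k) :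
    Summable fun n : ℕ => ‖1 / ((n : ℂ) + 1) ^ k‖ := by
  refine ((summable_nat_add_iff 1).mpr (Real.summable_one_div_nat_pow.mpr hk)).congr fun n => ?_
  rw [norm_div, norm_pow, norm_one, ← Nat.cast_add_one, Complex.norm_natCast]

lemma riemannZeta_mul_riemannZeta_eq_zeta2_add_zeta2_add {a b : ℕ} (ha : 1 < a) (hb : 1 < b) :
    riemannZeta a * riemannZeta b = zeta2 a b + zeta2 b a + riemannZeta (a + b : ℕ) := by
  have hsa := summable_norm_one_div_nat_add_one_pow ha
  have hsb := summable_norm_one_div_nat_add_one_pow hb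
  have h_summable := summable_mul_of_summable_norm hsa hsb
  rw [riemannZeta_nat_eq_tsum_one_div_nat_add_one_pow ha,
    riemannZeta_nat_eq_tsum_one_div_nat_add_one_pow hb,
    riemannZeta_nat_eq_tsum_one_div_nat_add_one_pow (by lia),
    tsum_mul_tsum_of_summable_norm hsa hsb,
    tsum_nat_prod_eq_tsum_trichotomy h_summable, zeta2, zeta2]
  congr 1
  · congr 1 <;>
    · refine tsum_congr fun p => ?_
      push_cast
      ring
  · refine tsum_congr fun k => ?_
    ring

lemma sum_Ico_add_reflect_mul_zeta2 (c : ℕ → ℂ) {d : ℕ} (hd : 1 < d) (N : ℕ) :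
    ∑ ν ∈ Ico 1 N, (c ν + c (N - ν)) * zeta2 (d * (N - ν)) (d * ν) =
      ∑ ν ∈ Ico 1 N, c ν * (riemannZeta (d * ν) * riemannZeta (d * (N - ν : ℕ))) -
        (∑ ν ∈ Ico 1 N, c ν) * riemannZeta (d * N) := by
  have reflect : ∑ ν ∈ Ico 1 N, c (N - ν) * zeta2 (d * (N - ν)) (d * ν) =
      ∑ ν ∈ Ico 1 N, c ν * zeta2 (d * ν) (d * (N - ν)) := by
    have h := sum_Ico_reflect (fun ν => c ν * zeta2 (d * ν) (d * (N - ν))) 1 N.le_succ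
    rw [Nat.add_sub_cancel_left, Nat.add_sub_cancel] at h
    rw [← h]
    refine sum_congr rfl fun ν hν => ?_
    rw [Nat.sub_sub_self (mem_Ico.mp hν).2.le]
  have stuffle : ∀ ν ∈ Ico 1 N, c ν * (zeta2 (d * (N - ν)) (d * ν) + zeta2 (d * ν) (d * (N - ν))) =
      c ν * (riemannZeta (d * ν) * riemannZeta (d * (N - ν : ℕ))) - c ν * riemannZeta (d * N) := by
    intro ν hν
    obtain ⟨hν1, hνN⟩ := mem_Ico.mp hν
    have h := riemannZeta_mul_riemannZeta_eq_zeta2_add_zeta2_add (a := d * ν) (b := d * (N - ν))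
      (hd.trans_le (Nat.le_mul_of_pos_right d hν1))
      (hd.trans_le (Nat.le_mul_of_pos_right d (Nat.sub_pos_of_lt hνN)))
    rw [← mul_add, Nat.add_sub_cancel' hνN.le] at h
    simp only [Nat.cast_mul] at h
    linear_combination -c ν * h
  simp only [add_mul]
  rw [sum_add_distrib, reflect, ← sum_add_distrib, sum_mul, ← sum_sub_distrib]
  simp only [← mul_add]
  exact sum_congr rfl stuffle

end Stuffle

theorem Nakamura_weighted_sum_formula (N : ℕ) (hN : 2 ≤ N) :
    ∑ ν ∈ Finset.Icc 1 (N - 1),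
        ((4 : ℂ) ^ ν + (4 : ℂ) ^ (N - ν)) * zeta2 (2 * N - 2 * ν) (2 * ν)
      = ((N : ℂ) + 4 / 3 + (2 / 3) * 4 ^ (N - 1)) * riemannZeta (2 * N) := by
  have Icc_eq : Icc 1 (N - 1) = Ico 1 N := by
    ext
    simp only [mem_Icc, mem_Ico]
    lia
  have geom : ∑ ν ∈ Ico 1 N, (4 : ℂ) ^ ν = (4 ^ N - 4) / 3 := by
    rw [geom_sum_Ico (by norm_num) (by lia)]
    norm_num
  have four_pow : (4 : ℂ) ^ N = 4 * 4 ^ (N - 1) := (mul_pow_sub_one (by lia) 4).symm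
  calc _ = ∑ ν ∈ Ico 1 N, ((4 : ℂ) ^ ν + 4 ^ (N - ν)) * zeta2 (2 * (N - ν)) (2 * ν) := by
        simp only [Icc_eq, Nat.mul_sub]
    _ = ∑ ν ∈ Ico 1 N, 4 ^ ν * (riemannZeta (2 * ν) * riemannZeta (2 * (N - ν : ℕ))) -
          (∑ ν ∈ Ico 1 N, 4 ^ ν) * riemannZeta (2 * N) :=
        mod_cast sum_Ico_add_reflect_mul_zeta2 (4 ^ ·) one_lt_two N
    _ = (N + 4 ^ N / 2) * riemannZeta (2 * N) - (4 ^ N - 4) / 3 * riemannZeta (2 * N) := by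
        rw [sum_Ico_four_pow_mul_riemannZeta hN, geom]
    _ = (N + 4 / 3 + 2 / 3 * 4 ^ (N - 1)) * riemannZeta (2 * N) := by
        rw [four_pow]
        ring
end
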